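/- arXiv:1803.03506 — 2 statements merged into one kernel-verified Lean document; each statement's English description precedes it below -/
import Mathlib

section
/- Let (s_n)_{n≥1} be a real sequence that is conditionally positive definite and exponentially bounded. Then there exist γ ∈ ℝ and a finite Borel measure ρ on ℝ with compact support such that s_1 = γ and s_{n+2} = ∫_ℝ x^n dρ(x) for all n ≥ 0; moreover the pair (γ, ρ) with these properties is unique. -/
open Complex MeasureTheory Finset

/-- A complex number is a nonnegative real. -/
def IsNonnegReal (w : ℂ) : Prop := w.im = 0 ∧ 0 ≤ w.re

/-- A real sequence (indexed from 1) is conditionally positive definite. -/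
def CondPosDef (s : ℕ → ℝ) : Prop :=
  ∀ (n : ℕ), 1 ≤ n → ∀ (a : ℕ → ℂ),
    IsNonnegReal (∑ i ∈ Finset.Icc 1 n, ∑ j ∈ Finset.Icc 1 n,
      a i * starRingEnd ℂ (a j) * (s (i + j) : ℂ))

/-- A real sequence (indexed from 1) is exponentially bounded. -/
def ExpBounded (s : ℕ → ℝ) : Prop :=
  ∃ C : ℝ, 0 < C ∧ ∀ n : ℕ, 1 ≤ n → |s n| ≤ C ^ n

/-!
The shifted moments `s (n + 2)` define a linear functional `L` on `ℝ[X]` which is nonnegative on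
squares and satisfies `L (X ^ n) = O(c ^ n)`. Iterating the Cauchy-Schwarz inequality upgrades this
growth bound to `|L X| ≤ c * L 1`, i.e. to `0 ≤ L (c - X)` and `0 ≤ L (c + X)`. Both hypotheses on
`L` pass to `q ↦ L (p * q)` whenever `0 ≤ L (p * q ^ 2)` for all `q`, so `L` is nonnegative on every
sum of products of squares, `c - X` and `c + X`; by factoring over `ℝ` these are all the polynomials
that are nonnegative on `[-c, c]`. The Riesz extension theorem and the Riesz-Markov-Kakutani
theorem then represent `L` by a measure on `[-c, c]`, and Weierstrass approximation makes it unique.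
-/

open Filter Polynomial

section CauchySchwarz

variable {A : Type*} [CommRing A] [Algebra ℝ A] {L : A →ₗ[ℝ] ℝ}

theorem sq_apply_mul_le (hL : ∀ a, 0 ≤ L (a * a)) (a b : A) :
    L (a * b) ^ 2 ≤ L (a * a) * L (b * b) :=
  LinearMap.BilinForm.apply_sq_le_of_symm ((LinearMap.mul ℝ A).compr₂ L) hL
    ⟨fun x y => congrArg L (mul_comm x y)⟩ a b

theorem pos_and_mul_le_succ_of_sq_le_mul {u : ℕ → ℝ} {r : ℝ} (hr : 0 < r) (h0 : 0 < u 0)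
    (h1 : r * u 0 ≤ u 1) (hu : ∀ n, u (n + 1) ^ 2 ≤ u n * u (n + 2)) (n : ℕ) :
    0 < u n ∧ r * u n ≤ u (n + 1) := by
  induction n with
  | zero => exact ⟨h0, h1⟩
  | succ n ih =>
    obtain ⟨hpos, hle⟩ := ih
    have hpos' : 0 < u (n + 1) := (mul_pos hr hpos).trans_le hle
    refine ⟨hpos', le_of_mul_le_mul_left ?_ hpos⟩
    calc u n * (r * u (n + 1)) = r * u n * u (n + 1) := by ring
      _ ≤ u (n + 1) * u (n + 1) := by gcongr
      _ = u (n + 1) ^ 2 := (sq _).symm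
      _ ≤ u n * u (n + 2) := hu n

theorem apply_one_le_mul_of_sq_le_mul_of_isBigO_pow {u : ℕ → ℝ} {c : ℝ} (hc : 0 ≤ c)
    (h0 : ∀ n, 0 ≤ u n) (hu : ∀ n, u (n + 1) ^ 2 ≤ u n * u (n + 2))
    (hO : u =O[atTop] fun n => c ^ n) : u 1 ≤ c * u 0 := by
  by_contra! hlt
  have hu0 : 0 < u 0 := by
    refine (h0 0).lt_of_ne' fun h => ?_
    have hsq := hu 0
    simp only [h, mul_zero, zero_mul, zero_add] at hlt hsq
    exact (pow_pos hlt 2).not_ge hsq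
  have hcr : c < u 1 / u 0 := (lt_div_iff₀ hu0).2 hlt
  set r := u 1 / u 0
  have hr : 0 < r := hc.trans_lt hcr
  have hgeom (n : ℕ) : r ^ n * u 0 ≤ u n := geom_le hr.le n fun k _ =>
    (pos_and_mul_le_succ_of_sq_le_mul hr hu0 (div_mul_cancel₀ _ hu0.ne').le hu k).2
  have hrO : (fun n => r ^ n) =O[atTop] u := by
    refine .of_bound (u 0)⁻¹ (.of_forall fun n => ?_)
    rw [Real.norm_of_nonneg (pow_nonneg hr.le n), Real.norm_of_nonneg (h0 n),
      ← div_eq_inv_mul, le_div_iff₀ hu0]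
    exact hgeom n
  exact Asymptotics.isLittleO_irrefl (.of_forall fun n => pow_ne_zero n hr.ne')
    ((hrO.trans hO).trans_isLittleO (isLittleO_pow_pow_of_lt_left hc hcr))

theorem abs_apply_le_mul_apply_one (hL : ∀ a, 0 ≤ L (a * a)) {a : A} {c : ℝ} (hc : 0 ≤ c)
    (hO : (fun n => L (a ^ n)) =O[atTop] fun n => c ^ n) : |L a| ≤ c * L 1 := by
  have hL1 : 0 ≤ L 1 := by simpa only [mul_one] using hL 1
  have hsq : L (a * a) ≤ c ^ 2 * L 1 := by
    have hlog (n : ℕ) : L (a ^ (n + 1) * a ^ (n + 1)) ^ 2 ≤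
        L (a ^ n * a ^ n) * L (a ^ (n + 2) * a ^ (n + 2)) := by
      convert! sq_apply_mul_le hL (a ^ n) (a ^ (n + 2)) using 3
      ring
    have hO₂ : (fun n => L (a ^ n * a ^ n)) =O[atTop] fun n => (c ^ 2) ^ n := by
      simp only [← pow_add, ← two_mul, ← pow_mul]
      exact hO.comp_tendsto (tendsto_id.const_mul_atTop' two_pos)
    simpa only [zero_add, pow_one, pow_zero, mul_one] using
      apply_one_le_mul_of_sq_le_mul_of_isBigO_pow (sq_nonneg c) (fun n => hL (a ^ n)) hlog hO₂
  refine abs_le_of_sq_le_sq ?_ (mul_nonneg hc hL1)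
  calc L a ^ 2 ≤ L 1 * L (a * a) := by simpa only [one_mul] using sq_apply_mul_le hL 1 a
    _ ≤ L 1 * (c ^ 2 * L 1) := by gcongr
    _ = (c * L 1) ^ 2 := by ring

end CauchySchwarz

section IntervalPreordering

variable {a b : ℝ} {p d q : ℝ[X]}

/-- The preordering of `ℝ[X]` generated by `X - a` and `b - X`: the sums of products of squares
and these two generators. -/
noncomputable def intervalPreordering (a b : ℝ) : Subsemiring ℝ[X] :=
  Subsemiring.closure ({p | IsSquare p} ∪ {X - C a, C b - X})

theorem mul_self_mem_intervalPreordering (p : ℝ[X]) : p * p ∈ intervalPreordering a b :=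
  Subsemiring.subset_closure (.inl (IsSquare.mul_self p))

theorem C_mem_intervalPreordering {t : ℝ} (ht : 0 ≤ t) : C t ∈ intervalPreordering a b := by
  rw [← Real.mul_self_sqrt ht, C_mul]
  exact mul_self_mem_intervalPreordering _

theorem X_sub_C_mem_intervalPreordering {r : ℝ} (hr : r ≤ a) :
    X - C r ∈ intervalPreordering a b := by
  have hgen : X - C a ∈ intervalPreordering a b := Subsemiring.subset_closure (by simp)
  simpa only [C_sub, sub_add_sub_cancel] using
    add_mem hgen (C_mem_intervalPreordering (sub_nonneg.2 hr))

theorem C_sub_X_mem_intervalPreordering {r : ℝ} (hr : b ≤ r) :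
    C r - X ∈ intervalPreordering a b := by
  have hgen : C b - X ∈ intervalPreordering a b := Subsemiring.subset_closure (by simp)
  simpa only [C_sub, sub_add_sub_cancel] using
    add_mem (C_mem_intervalPreordering (sub_nonneg.2 hr)) hgen

theorem eval_nonneg_of_mem_intervalPreordering (hp : p ∈ intervalPreordering a b) {x : ℝ}
    (hx : x ∈ Set.Icc a b) : 0 ≤ p.eval x := by
  suffices h : intervalPreordering a b ≤ (Subsemiring.nonneg ℝ).comap (evalRingHom x) from h hp
  refine Subsemiring.closure_le.2 ?_
  rintro _ (⟨q, rfl⟩ | rfl | rfl)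
  · simpa using mul_self_nonneg (q.eval x)
  · simpa using hx.1
  · simpa using hx.2

theorem eval_nonneg_of_eval_mul_nonneg (hab : a < b) (hd0 : d ≠ 0)
    (hd : ∀ x ∈ Set.Icc a b, 0 ≤ d.eval x) (hdq : ∀ x ∈ Set.Icc a b, 0 ≤ (d * q).eval x) :
    ∀ x ∈ Set.Icc a b, 0 ≤ q.eval x := by
  have hdense : Dense {x | d.IsRoot x}ᶜ := (finite_setOfPred_isRoot hd0).countable.dense_compl ℝ
  have hclosed : IsClosed {x | 0 ≤ q.eval x} := isClosed_le continuous_const q.continuous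
  have hsub : Set.Ioo a b ∩ {x | d.IsRoot x}ᶜ ⊆ {x | 0 ≤ q.eval x} := fun x ⟨hx, hroot⟩ => by
    have hx' := Set.Ioo_subset_Icc_self hx
    have hmul := hdq x hx'
    rw [eval_mul] at hmul
    exact nonneg_of_mul_nonneg_right hmul ((hd x hx').lt_of_ne' hroot)
  rw [← closure_Ioo hab.ne]
  exact closure_minimal
    ((hdense.open_subset_closure_inter isOpen_Ioo).trans (closure_minimal hsub hclosed)) hclosed

theorem X_sub_C_mul_self_dvd_of_isLocalMin {r : ℝ} (hroot : p.IsRoot r)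
    (hmin : IsLocalMin (fun x => p.eval x) r) : (X - C r) * (X - C r) ∣ p := by
  rcases eq_or_ne p 0 with rfl | hp0
  · exact dvd_zero _
  have hderiv : p.derivative.IsRoot r := by
    rw [IsRoot, ← Polynomial.deriv]
    exact hmin.deriv_eq_zero
  rw [← sq, ← le_rootMultiplicity_iff hp0]
  exact (one_lt_rootMultiplicity_iff_isRoot hp0).2 ⟨hroot, hderiv⟩

theorem exists_dvd_mem_intervalPreordering_of_isRoot
    (hp : ∀ x ∈ Set.Icc a b, 0 ≤ p.eval x) {r : ℝ} (hroot : p.IsRoot r) :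
    ∃ d ∈ intervalPreordering a b, d ∣ p ∧ 0 < d.natDegree := by
  have hdvd : X - C r ∣ p := dvd_iff_isRoot.2 hroot
  rcases le_or_gt r a with hra | har
  · exact ⟨_, X_sub_C_mem_intervalPreordering hra, hdvd, by simp⟩
  rcases le_or_gt b r with hbr | hrb
  · refine ⟨_, C_sub_X_mem_intervalPreordering hbr, ?_, ?_⟩
    · rwa [← neg_sub, neg_dvd]
    · rw [← neg_sub, natDegree_neg, natDegree_X_sub_C]
      exact one_pos
  · refine ⟨_, mul_self_mem_intervalPreordering (X - C r),
      X_sub_C_mul_self_dvd_of_isLocalMin hroot ?_, ?_⟩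
    · filter_upwards [Icc_mem_nhds har hrb] with x hx
      rw [hroot.eq_zero]
      exact hp x hx
    · rw [← sq, natDegree_pow, natDegree_X_sub_C]
      exact two_pos

theorem exists_dvd_mem_intervalPreordering_of_aeval_eq_zero {z : ℂ} (hz : aeval z p = 0)
    (him : z.im ≠ 0) : ∃ d ∈ intervalPreordering a b, d ∣ p ∧ 0 < d.natDegree := by
  have hquad : (X ^ 2 - C (2 * z.re) * X + C (‖z‖ ^ 2) : ℝ[X]) =
      (X - C z.re) * (X - C z.re) + C z.im * C z.im := by
    rw [← Complex.normSq_eq_norm_sq, Complex.normSq_apply]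
    simp only [C_add, C_mul, map_ofNat]
    ring
  refine ⟨_, add_mem (mul_self_mem_intervalPreordering _) (mul_self_mem_intervalPreordering _),
    hquad ▸ quadratic_dvd_of_aeval_eq_zero_im_ne_zero p hz him, ?_⟩
  rw [← C_mul, natDegree_add_C, ← sq, natDegree_pow, natDegree_X_sub_C]
  exact two_pos

theorem exists_dvd_mem_intervalPreordering (hp : ∀ x ∈ Set.Icc a b, 0 ≤ p.eval x)
    (hdeg : 0 < p.natDegree) : ∃ d ∈ intervalPreordering a b, d ∣ p ∧ 0 < d.natDegree := by
  obtain ⟨z, hz⟩ := IsAlgClosed.exists_aeval_eq_zero ℂ p (natDegree_pos_iff_degree_pos.1 hdeg).ne'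
  by_cases him : z.im = 0
  · obtain ⟨r, rfl⟩ : ∃ r : ℝ, algebraMap ℝ ℂ r = z := ⟨z.re, Complex.ext rfl him.symm⟩
    rw [aeval_algebraMap_eq_zero_iff, coe_aeval_eq_eval] at hz
    exact exists_dvd_mem_intervalPreordering_of_isRoot hp hz
  · exact exists_dvd_mem_intervalPreordering_of_aeval_eq_zero hz him

theorem mem_intervalPreordering_of_eval_nonneg (hab : a < b)
    (hp : ∀ x ∈ Set.Icc a b, 0 ≤ p.eval x) : p ∈ intervalPreordering a b := by
  induction hn : p.natDegree using Nat.strong_induction_on generalizing p with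
  | _ n ih =>
    subst hn
    rcases p.natDegree.eq_zero_or_pos with hdeg | hdeg
    · rw [eq_C_of_natDegree_eq_zero hdeg] at hp ⊢
      exact C_mem_intervalPreordering (by simpa only [eval_C] using hp a ⟨le_rfl, hab.le⟩)
    obtain ⟨d, hd, ⟨q, rfl⟩, hd_pos⟩ := exists_dvd_mem_intervalPreordering hp hdeg
    have hdq0 : d * q ≠ 0 := ne_zero_of_natDegree_gt hdeg
    have hd0 : d ≠ 0 := left_ne_zero_of_mul hdq0
    have hq_lt : q.natDegree < (d * q).natDegree := by
      rw [natDegree_mul hd0 (right_ne_zero_of_mul hdq0)]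
      exact Nat.lt_add_of_pos_left hd_pos
    have hq : ∀ x ∈ Set.Icc a b, 0 ≤ q.eval x := eval_nonneg_of_eval_mul_nonneg hab hd0
      (fun _ => eval_nonneg_of_mem_intervalPreordering hd) hp
    exact mul_mem hd (ih _ hq_lt hq rfl)

end IntervalPreordering

/-- A linear functional on `ℝ[X]` which is nonnegative on squares and whose moments grow at most
like `c ^ n`. These are the functionals represented by a measure on `[-c, c]`. -/
structure IsPositiveOfGrowth (c : ℝ) (L : ℝ[X] →ₗ[ℝ] ℝ) : Prop where
  nonneg_mul_self : ∀ p, 0 ≤ L (p * p)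
  isBigO_X_pow : (fun n : ℕ => L (X ^ n)) =O[atTop] fun n => c ^ n

namespace IsPositiveOfGrowth

variable {c : ℝ} {L : ℝ[X] →ₗ[ℝ] ℝ}

theorem isBigO_mul_X_pow (hL : IsPositiveOfGrowth c L) (p : ℝ[X]) :
    (fun n : ℕ => L (p * X ^ n)) =O[atTop] fun n => c ^ n := by
  induction p using Polynomial.induction_on' with
  | add p q hp hq => simpa only [add_mul, map_add] using hp.add hq
  | monomial k t =>
    have hshift (n : ℕ) : L (monomial k t * X ^ n) = t * L (X ^ (n + k)) := by
      rw [← C_mul_X_pow_eq_monomial, mul_assoc, ← pow_add, add_comm k, ← smul_eq_C_mul, map_smul,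
        smul_eq_mul]
    have hpow : (fun n : ℕ => c ^ (n + k)) =O[atTop] fun n => c ^ n := by
      simp only [add_comm _ k, pow_add]
      exact Asymptotics.isBigO_const_mul_self ..
    simp only [hshift]
    exact ((hL.isBigO_X_pow.comp_tendsto (tendsto_add_atTop_nat k)).trans hpow).const_mul_left t

theorem comp_mulLeft (hL : IsPositiveOfGrowth c L) {p : ℝ[X]}
    (hp : ∀ q, 0 ≤ L (p * (q * q))) : IsPositiveOfGrowth c (L ∘ₗ LinearMap.mulLeft ℝ p) :=
  ⟨hp, hL.isBigO_mul_X_pow p⟩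

theorem comp_mulLeft_mul_self (hL : IsPositiveOfGrowth c L) (p : ℝ[X]) :
    IsPositiveOfGrowth c (L ∘ₗ LinearMap.mulLeft ℝ (p * p)) :=
  hL.comp_mulLeft fun q => mul_mul_mul_comm p q p q ▸ hL.nonneg_mul_self (p * q)

theorem abs_apply_X_le (hL : IsPositiveOfGrowth c L) (hc : 0 ≤ c) : |L X| ≤ c * L 1 :=
  abs_apply_le_mul_apply_one hL.nonneg_mul_self hc hL.isBigO_X_pow

theorem nonneg_of_mem_intervalPreordering (hL : IsPositiveOfGrowth c L) (hc : 0 ≤ c) {p : ℝ[X]}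
    (hp : p ∈ intervalPreordering (-c) c) : 0 ≤ L p := by
  have map_C (t : ℝ) (L : ℝ[X] →ₗ[ℝ] ℝ) : L (C t) = t * L 1 := by
    rw [← mul_one (C t), ← smul_eq_C_mul, map_smul, smul_eq_mul]
  induction hp using Subsemiring.closure_induction generalizing L with
  | mem p hp =>
    obtain ⟨hlower, hupper⟩ := abs_le.1 (hL.abs_apply_X_le hc)
    rcases hp with ⟨q, rfl⟩ | rfl | rfl
    · exact hL.nonneg_mul_self q
    · rw [map_sub, map_C]
      linarith
    · rw [map_sub, map_C]
      linarith
  | zero => exact (map_zero L).ge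
  | one => simpa only [mul_one] using hL.nonneg_mul_self 1
  | add p q _ _ ihp ihq => exact map_add L p q ▸ add_nonneg (ihp hL) (ihq hL)
  | mul p _ _ _ ihp ihq =>
    have hloc (r : ℝ[X]) : 0 ≤ L (p * (r * r)) :=
      mul_comm (r * r) p ▸ ihp (hL.comp_mulLeft_mul_self r)
    exact ihq (hL.comp_mulLeft hloc)

end IsPositiveOfGrowth

section RieszRepresentation

theorem exists_positive_extension_of_nonneg {X V : Type*} [TopologicalSpace X] [CompactSpace X]
    [AddCommGroup V] [Module ℝ V] (φ : V →ₗ[ℝ] C(X, ℝ)) (h1 : 1 ∈ LinearMap.range φ)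
    {L : V →ₗ[ℝ] ℝ} (hL : ∀ v, 0 ≤ φ v → 0 ≤ L v) :
    ∃ Λ : C(X, ℝ) →ₗ[ℝ] ℝ, (∀ v, Λ (φ v) = L v) ∧ ∀ f, 0 ≤ f → 0 ≤ Λ f := by
  obtain ⟨σ, hσ⟩ := φ.rangeRestrict.exists_rightInverse_of_surjective φ.range_rangeRestrict
  have hφσ (f : LinearMap.range φ) : φ (σ f) = f := congrArg Subtype.val (LinearMap.congr_fun hσ f)
  have hmono {v w : V} (h : φ v ≤ φ w) : L v ≤ L w := by
    simpa only [map_sub, sub_nonneg] using hL (w - v) (by rwa [map_sub, sub_nonneg])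
  obtain ⟨Λ, hΛ, hΛ_nonneg⟩ := riesz_extension (PointedCone.positive ℝ C(X, ℝ))
    ⟨LinearMap.range φ, L ∘ₗ σ⟩
    (fun f hf => hL _ ((hφσ f).symm ▸ hf))
    (fun f => ⟨‖f‖ • ⟨1, h1⟩, fun x => by
      simpa [neg_le_iff_add_nonneg'] using (abs_le.1 (f.norm_coe_le_norm x)).1⟩)
  refine ⟨Λ, fun v => ?_, fun f hf => hΛ_nonneg f hf⟩
  have hφv : φ (σ (φ.rangeRestrict v)) = φ v := hφσ _
  exact (hΛ (φ.rangeRestrict v)).trans (le_antisymm (hmono hφv.le) (hmono hφv.ge))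

theorem exists_isFiniteMeasure_integral_eq {X : Type*} [TopologicalSpace X] [CompactSpace X]
    [T2Space X] [MeasurableSpace X] [BorelSpace X] (Λ : C(X, ℝ) →ₗ[ℝ] ℝ)
    (hΛ : ∀ f, 0 ≤ f → 0 ≤ Λ f) :
    ∃ μ : Measure X, IsFiniteMeasure μ ∧ ∀ f : C(X, ℝ), ∫ x, f x ∂μ = Λ f := by
  let Λc : CompactlySupportedContinuousMap X ℝ →ₚ[ℝ] ℝ := PositiveLinearMap.mk₀
    { toFun f := Λ f.toContinuousMap
      map_add' f g := Λ.map_add f.toContinuousMap g.toContinuousMap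
      map_smul' t f := Λ.map_smul t f.toContinuousMap }
    (fun f hf => hΛ f.toContinuousMap hf)
  exact ⟨RealRMK.rieszMeasure Λc, inferInstance, fun f =>
    RealRMK.integral_rieszMeasure Λc (CompactlySupportedContinuousMap.continuousMapEquiv f)⟩

theorem exists_measure_integral_eval_eq_of_nonneg {K : Set ℝ} (hK : IsCompact K) {L : ℝ[X] →ₗ[ℝ] ℝ}
    (hL : ∀ p : ℝ[X], (∀ x ∈ K, 0 ≤ p.eval x) → 0 ≤ L p) :
    ∃ ρ : Measure ℝ, IsFiniteMeasure ρ ∧ ρ Kᶜ = 0 ∧ ∀ p : ℝ[X], ∫ x, p.eval x ∂ρ = L p := by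
  have : CompactSpace K := isCompact_iff_compactSpace.1 hK
  obtain ⟨Λ, hΛL, hΛ⟩ := exists_positive_extension_of_nonneg
    (toContinuousMapOnAlgHom K).toLinearMap ⟨1, map_one (toContinuousMapOnAlgHom K)⟩
    (fun p hp => hL p fun x hx => hp ⟨x, hx⟩)
  obtain ⟨μ, hμ, hμΛ⟩ := exists_isFiniteMeasure_integral_eq Λ hΛ
  refine ⟨μ.map Subtype.val, inferInstance, ?_, fun p => ?_⟩
  · rw [Measure.map_apply measurable_subtype_coe hK.measurableSet.compl]
    simp
  · rw [(MeasurableEmbedding.subtype_coe hK.measurableSet).integral_map, ← hΛL, ← hμΛ]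
    rfl

end RieszRepresentation

theorem IsPositiveOfGrowth.exists_measure_integral_eval_eq {c : ℝ} {L : ℝ[X] →ₗ[ℝ] ℝ}
    (hL : IsPositiveOfGrowth c L) (hc : 0 < c) :
    ∃ ρ : Measure ℝ, IsFiniteMeasure ρ ∧ ρ (Set.Icc (-c) c)ᶜ = 0 ∧
      ∀ p : ℝ[X], ∫ x, p.eval x ∂ρ = L p :=
  exists_measure_integral_eval_eq_of_nonneg isCompact_Icc fun _ hp =>
    hL.nonneg_of_mem_intervalPreordering hc.le
      (mem_intervalPreordering_of_eval_nonneg (neg_lt_self hc) hp)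

section Uniqueness

theorem continuous_integral_continuousMap {X : Type*} [TopologicalSpace X] [CompactSpace X]
    [MeasurableSpace X] [OpensMeasurableSpace X] (μ : Measure X) [IsFiniteMeasure μ] :
    Continuous fun f : C(X, ℝ) => ∫ x, f x ∂μ := by
  refine (LipschitzWith.of_dist_le_mul (K := (μ.real Set.univ).toNNReal) fun f g => ?_).continuous
  have hintegrable (f : C(X, ℝ)) : Integrable f μ :=
    (BoundedContinuousFunction.mkOfCompact f).integrable μ
  rw [dist_eq_norm, dist_eq_norm, ← integral_sub (hintegrable f) (hintegrable g),
    Real.coe_toNNReal _ measureReal_nonneg]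
  exact (BoundedContinuousFunction.mkOfCompact (f - g)).norm_integral_le_mul_norm μ

theorem measure_eq_of_integral_eq_on_dense {X : Type*} [TopologicalSpace X] [CompactSpace X]
    [HasOuterApproxClosed X] [MeasurableSpace X] [BorelSpace X] {μ ν : Measure X}
    [IsFiniteMeasure μ] [IsFiniteMeasure ν] {A : Set C(X, ℝ)} (hA : Dense A)
    (h : ∀ f ∈ A, ∫ x, f x ∂μ = ∫ x, f x ∂ν) : μ = ν :=
  ext_of_forall_integral_eq_of_IsFiniteMeasure fun f =>
    congrFun ((continuous_integral_continuousMap μ).ext_on hA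
      (continuous_integral_continuousMap ν) h) f.toContinuousMap

theorem restrict_eq_self_of_compl_null {X : Type*} [MeasurableSpace X] {μ : Measure X} {K : Set X}
    (hμ : μ Kᶜ = 0) : μ.restrict K = μ :=
  Measure.restrict_eq_self_of_ae_mem (mem_ae_iff.2 hμ)

theorem integrable_of_continuous_of_compl_null {X E : Type*} [TopologicalSpace X]
    [MeasurableSpace X] [OpensMeasurableSpace X] [T2Space X] [NormedAddCommGroup E]
    {K : Set X} (hK : IsCompact K) {μ : Measure X} [IsFiniteMeasureOnCompacts μ] (hμ : μ Kᶜ = 0)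
    {f : X → E} (hf : Continuous f) : Integrable f μ := by
  rw [← restrict_eq_self_of_compl_null hμ]
  exact hf.continuousOn.integrableOn_compact hK

theorem integral_eval_eq_of_integral_pow_eq {μ ν : Measure ℝ}
    (hμ : ∀ n : ℕ, Integrable (fun x => x ^ n) μ) (hν : ∀ n : ℕ, Integrable (fun x => x ^ n) ν)
    (h : ∀ n : ℕ, ∫ x, x ^ n ∂μ = ∫ x, x ^ n ∂ν) (p : ℝ[X]) :
    ∫ x, p.eval x ∂μ = ∫ x, p.eval x ∂ν := by
  simp only [eval_eq_sum_range]
  rw [integral_finsetSum _ fun n _ => (hμ n).const_mul _,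
    integral_finsetSum _ fun n _ => (hν n).const_mul _]
  simp only [integral_const_mul, h]

theorem measure_eq_of_integral_pow_eq {K : Set ℝ} (hK : IsCompact K) {μ ν : Measure ℝ}
    [IsFiniteMeasure μ] [IsFiniteMeasure ν] (hμ : μ Kᶜ = 0) (hν : ν Kᶜ = 0)
    (h : ∀ n : ℕ, ∫ x, x ^ n ∂μ = ∫ x, x ^ n ∂ν) : μ = ν := by
  have : CompactSpace K := isCompact_iff_compactSpace.1 hK
  have hdense : Dense (polynomialFunctions K : Set C(K, ℝ)) := by
    rw [dense_iff_closure_eq, ← Subalgebra.topologicalClosure_coe,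
      polynomialFunctions.topologicalClosure K, Algebra.coe_top]
  have hcomap : μ.comap ((↑) : K → ℝ) = ν.comap (↑) := by
    refine measure_eq_of_integral_eq_on_dense hdense ?_
    rintro _ ⟨p, -, rfl⟩
    change ∫ x : K, p.eval (x : ℝ) ∂μ.comap (↑) = ∫ x : K, p.eval (x : ℝ) ∂ν.comap (↑)
    rw [integral_subtype_comap hK.measurableSet fun x => p.eval x,
      integral_subtype_comap hK.measurableSet fun x => p.eval x,
      restrict_eq_self_of_compl_null hμ, restrict_eq_self_of_compl_null hν]
    exact integral_eval_eq_of_integral_pow_eq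
      (fun n => integrable_of_continuous_of_compl_null hK hμ (continuous_pow n))
      (fun n => integrable_of_continuous_of_compl_null hK hν (continuous_pow n)) h p
  rw [← restrict_eq_self_of_compl_null hμ, ← restrict_eq_self_of_compl_null hν,
    ← map_comap_subtype_coe hK.measurableSet, hcomap, map_comap_subtype_coe hK.measurableSet]

end Uniqueness

section MomentFunctional

/-- The linear functional on `ℝ[X]` sending `X ^ n` to `m n`. -/
noncomputable def momentFunctional (m : ℕ → ℝ) : ℝ[X] →ₗ[ℝ] ℝ :=
  Polynomial.lsum fun n => m n • LinearMap.id

theorem momentFunctional_X_pow (m : ℕ → ℝ) (n : ℕ) : momentFunctional m (X ^ n) = m n := by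
  simp [momentFunctional, X_pow_eq_monomial]

theorem momentFunctional_mul_self (m : ℕ → ℝ) (p : ℝ[X]) :
    momentFunctional m (p * p) = ∑ i ∈ range (p.natDegree + 1), ∑ j ∈ range (p.natDegree + 1),
      p.coeff i * p.coeff j * m (i + j) := by
  conv_lhs => rw [p.as_sum_range_C_mul_X_pow]
  simp only [← smul_eq_C_mul, sum_mul_sum, smul_mul_smul_comm, ← pow_add, map_sum, map_smul,
    momentFunctional_X_pow, smul_eq_mul]

theorem CondPosDef.sum_nonneg {s : ℕ → ℝ} (hs : CondPosDef s) (N : ℕ) (a : ℕ → ℝ) :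
    0 ≤ ∑ i ∈ range N, ∑ j ∈ range N, a i * a j * s (i + j + 2) := by
  rcases N.eq_zero_or_pos with rfl | hN
  · simp
  have hshift (f : ℕ → ℝ) : ∑ i ∈ Icc 1 N, f i = ∑ i ∈ range N, f (i + 1) := by
    rw [range_eq_Ico, sum_Ico_add' f 0 N 1]
    rfl
  have hnonneg := (hs N hN fun i => (a (i - 1) : ℂ)).2
  simp only [Complex.conj_ofReal, ← Complex.ofReal_mul, ← Complex.ofReal_sum,
    Complex.ofReal_re, hshift, Nat.add_sub_cancel] at hnonneg
  simpa only [add_add_add_comm, one_add_one_eq_two] using hnonneg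

theorem CondPosDef.isPositiveOfGrowth {s : ℕ → ℝ} (hs : CondPosDef s) {c : ℝ}
    (hc : ∀ n, 1 ≤ n → |s n| ≤ c ^ n) :
    IsPositiveOfGrowth c (momentFunctional fun n => s (n + 2)) where
  nonneg_mul_self p := by
    rw [momentFunctional_mul_self]
    exact hs.sum_nonneg _ _
  isBigO_X_pow := by
    refine .of_bound (c ^ 2) (.of_forall fun n => ?_)
    rw [momentFunctional_X_pow, Real.norm_eq_abs, Real.norm_eq_abs]
    calc |s (n + 2)| ≤ c ^ (n + 2) := hc _ (Nat.le_add_left 1 (n + 1))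
      _ = c ^ 2 * c ^ n := by rw [add_comm, pow_add]
      _ ≤ c ^ 2 * |c ^ n| := by
        gcongr
        exact le_abs_self _

end MomentFunctional

theorem levy_khintchine_representation_exists_unique
    (s : ℕ → ℝ) (hcpd : CondPosDef s) (hexp : ExpBounded s) :
    ∃ (γ : ℝ) (ρ : Measure ℝ),
      IsFiniteMeasure ρ ∧
      (∃ K : Set ℝ, IsCompact K ∧ ρ Kᶜ = 0) ∧
      s 1 = γ ∧ (∀ n : ℕ, s (n + 2) = ∫ x : ℝ, x ^ n ∂ρ) ∧
      (∀ (γ' : ℝ) (ρ' : Measure ℝ),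
        IsFiniteMeasure ρ' →
        (∃ K : Set ℝ, IsCompact K ∧ ρ' Kᶜ = 0) →
        s 1 = γ' → (∀ n : ℕ, s (n + 2) = ∫ x : ℝ, x ^ n ∂ρ') →
        γ' = γ ∧ ρ' = ρ) := by
  obtain ⟨c, hc, hsc⟩ := hexp
  obtain ⟨ρ, hρ, hρ_supp, hρ_int⟩ :=
    (hcpd.isPositiveOfGrowth hsc).exists_measure_integral_eval_eq hc
  have hρ_moment (n : ℕ) : s (n + 2) = ∫ x, x ^ n ∂ρ := by
    simpa only [eval_pow, eval_X, momentFunctional_X_pow] using (hρ_int (X ^ n)).symm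
  refine ⟨s 1, ρ, hρ, ⟨_, isCompact_Icc, hρ_supp⟩, rfl, hρ_moment, ?_⟩
  rintro γ' ρ' hρ' ⟨K, hK, hK_supp⟩ hγ' hρ'_moment
  refine ⟨hγ'.symm, measure_eq_of_integral_pow_eq (hK.union isCompact_Icc)
    (measure_mono_null (Set.compl_subset_compl.2 Set.subset_union_left) hK_supp)
    (measure_mono_null (Set.compl_subset_compl.2 Set.subset_union_right) hρ_supp) fun n => ?_⟩
  rw [← hρ'_moment, ← hρ_moment]
end

section
/- Let (s_n)_{n≥1} and (t_n)_{n≥1} be real sequences, each conditionally positive definite and exponentially bounded. Then the pointwise (Hadamard) product sequence (s_n · t_n)_{n≥1} is again conditionally positive definite and exponentially bounded. -/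
open Complex Finset

/-!
Conditional positive definiteness of `s` says that the infinite Hankel matrix with entries
`s (i + j + 2)`, `i, j ≥ 0`, is positive semidefinite. The Hankel matrix of a pointwise product is
the Hadamard product of the Hankel matrices, so the Schur product theorem applies.
-/

open Matrix

open scoped ComplexOrder

theorem posSemidef_iff_of_exhausting {ι κ R : Type*} [Ring R] [PartialOrder R] [StarRing R]
    {M : Matrix ι ι R} {S : κ → Finset ι} (hS : ∀ T : Finset ι, ∃ k, T ⊆ S k) :
    M.PosSemidef ↔ M.IsHermitian ∧
      ∀ k (x : ι → R), 0 ≤ ∑ i ∈ S k, ∑ j ∈ S k, star (x i) * M i j * x j := by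
  have sum_eq (k : κ) (x : ι →₀ R) (hx : x.support ⊆ S k) :
      (x.sum fun i xi ↦ x.sum fun j xj ↦ star xi * M i j * xj) =
        ∑ i ∈ S k, ∑ j ∈ S k, star (x i) * M i j * x j := by
    rw [Finsupp.sum_of_support_subset x hx _ (by simp)]
    exact sum_congr rfl fun i _ ↦ Finsupp.sum_of_support_subset x hx _ (by simp)
  refine and_congr_right fun _ ↦ ⟨fun hM k x ↦ ?_, fun hM x ↦ ?_⟩
  · set y : ι →₀ R := Finsupp.indicator (S k) fun i _ ↦ x i
    have hy : ∀ i ∈ S k, y i = x i := fun i hi ↦ Finsupp.indicator_of_mem hi _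
    calc 0 ≤ ∑ i ∈ S k, ∑ j ∈ S k, star (y i) * M i j * y j :=
          (hM y).trans_eq (sum_eq k y (Finsupp.support_indicator_subset _ _))
      _ = ∑ i ∈ S k, ∑ j ∈ S k, star (x i) * M i j * x j :=
          sum_congr rfl fun i hi ↦ sum_congr rfl fun j hj ↦ by rw [hy i hi, hy j hj]
  · obtain ⟨k, hk⟩ := hS x.support
    exact (hM k x).trans_eq (sum_eq k x hk).symm

section Hankel

variable {α : Type*}

/-- The infinite Hankel matrix `(u (i + j))` of a sequence `u`, with rows and columns indexed
from `0`; its positivity is that of the quadratic forms attached to `u`. -/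
def hankel (u : ℕ → α) : Matrix ℕ ℕ α :=
  of fun i j ↦ u (i + j)

theorem hankel_mul [Mul α] (u v : ℕ → α) : hankel (u * v) = hankel u ⊙ hankel v :=
  rfl

theorem isHermitian_hankel [Star α] {u : ℕ → α} (hu : IsSelfAdjoint u) :
    (hankel u).IsHermitian :=
  IsHermitian.ext fun i j ↦ by
    simpa only [hankel, of_apply, add_comm j i, Pi.star_apply] using congrFun hu.star_eq (i + j)

theorem posSemidef_hankel_iff [Ring α] [PartialOrder α] [StarRing α] {u : ℕ → α}
    (hu : IsSelfAdjoint u) :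
    (hankel u).PosSemidef ↔
      ∀ n (x : ℕ → α), 0 ≤ ∑ i ∈ range n, ∑ j ∈ range n, star (x i) * u (i + j) * x j :=
  (posSemidef_iff_of_exhausting Finset.exists_nat_subset_range).trans
    (and_iff_right (isHermitian_hankel hu))

end Hankel

theorem isNonnegReal_iff {w : ℂ} : IsNonnegReal w ↔ 0 ≤ w := by
  rw [Complex.nonneg_iff, IsNonnegReal, and_comm, eq_comm]

theorem sum_Icc_one_eq_sum_range {M : Type*} [AddCommMonoid M] (f : ℕ → M) (n : ℕ) :
    ∑ i ∈ Icc 1 n, f i = ∑ i ∈ range n, f (i + 1) := by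
  rw [range_eq_Ico, sum_Ico_add' f 0 n 1]
  rfl

theorem condPosDef_iff_sum_range_nonneg {s : ℕ → ℝ} :
    CondPosDef s ↔ ∀ n (x : ℕ → ℂ),
      0 ≤ ∑ i ∈ range n, ∑ j ∈ range n, star (x i) * (s (i + j + 2) : ℂ) * x j := by
  have sum_eq (n : ℕ) (a : ℕ → ℂ) :
      ∑ i ∈ Icc 1 n, ∑ j ∈ Icc 1 n, a i * starRingEnd ℂ (a j) * (s (i + j) : ℂ) =
        ∑ i ∈ range n, ∑ j ∈ range n, a (i + 1) * s (i + j + 2) * star (a (j + 1)) := by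
    simp only [sum_Icc_one_eq_sum_range, starRingEnd_apply, add_add_add_comm _ 1,
      mul_right_comm _ (star _), Nat.reduceAdd]
  simp only [CondPosDef, isNonnegReal_iff, sum_eq]
  -- `CondPosDef` conjugates the second factor, `PosSemidef` the first: `a (i + 1) = star (x i)`.
  refine ⟨fun h n x ↦ ?_, fun h n _ a ↦ ?_⟩
  · rcases n.eq_zero_or_pos with rfl | hn
    · simp
    · simpa using h n hn fun k ↦ star (x (k - 1))
  · simpa using h n fun i ↦ star (a (i + 1))

theorem condPosDef_iff_posSemidef_hankel {s : ℕ → ℝ} :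
    CondPosDef s ↔ (hankel fun n ↦ (s (n + 2) : ℂ)).PosSemidef :=
  condPosDef_iff_sum_range_nonneg.trans
    (posSemidef_hankel_iff (funext fun n ↦ conj_ofReal (s (n + 2)))).symm

theorem CondPosDef.mul {s t : ℕ → ℝ} (hs : CondPosDef s) (ht : CondPosDef t) :
    CondPosDef (s * t) := by
  rw [condPosDef_iff_posSemidef_hankel] at hs ht ⊢
  simpa only [← hankel_mul, Pi.mul_def, ← ofReal_mul] using hs.hadamard ht

theorem ExpBounded.mul {s t : ℕ → ℝ} (hs : ExpBounded s) (ht : ExpBounded t) :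
    ExpBounded (s * t) := by
  obtain ⟨C, hC, hsC⟩ := hs
  obtain ⟨D, hD, htD⟩ := ht
  refine ⟨C * D, mul_pos hC hD, fun n hn ↦ ?_⟩
  calc |s n * t n| = |s n| * |t n| := abs_mul _ _
    _ ≤ C ^ n * D ^ n := by gcongr; exacts [hsC n hn, htD n hn]
    _ = (C * D) ^ n := (mul_pow _ _ _).symm

theorem hadamard_product_cond_posdef_and_exp_bounded
    (s t : ℕ → ℝ)
    (hs_cpd : CondPosDef s) (hs_exp : ExpBounded s)
    (ht_cpd : CondPosDef t) (ht_exp : ExpBounded t) :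
    CondPosDef (fun n => s n * t n) ∧ ExpBounded (fun n => s n * t n) :=
  ⟨hs_cpd.mul ht_cpd, hs_exp.mul ht_exp⟩
end
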